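/- arXiv:2304.03319 — 5 statements merged into one kernel-verified Lean document; each statement's English description precedes it below -/
import Mathlib

section
/- Let f, f_n : [0,∞) → [0,∞) (n ∈ ℕ) be non-decreasing, unbounded, right-continuous functions, and assume f is strictly increasing. If f_n converges to f locally uniformly, then the right-continuous inverses converge locally uniformly: for every y ≥ 0, sup_{0 ≤ x ≤ y} |f_n→(x) − f→(x)| → 0 as n → ∞. -/
open Set Filter Metric Topology

/-- `f : ℝ → ℝ` represents a non-decreasing, unbounded, right-continuous function
`[0,∞) → [0,∞)`: it is nonnegative, monotone, unbounded and right-continuous on `[0,∞)`. -/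
def IsNDRC (f : ℝ → ℝ) : Prop :=
  (∀ s : ℝ, 0 ≤ s → 0 ≤ f s) ∧ MonotoneOn f (Set.Ici 0) ∧
    (∀ M : ℝ, ∃ s : ℝ, 0 ≤ s ∧ M < f s) ∧
    (∀ s : ℝ, 0 ≤ s → ContinuousWithinAt f (Set.Ici s) s)

/-- The right-continuous inverse `f→(x) = inf {t ≥ 0 : f t > x}`. -/
noncomputable def rcInv (f : ℝ → ℝ) (x : ℝ) : ℝ :=
  sInf {t : ℝ | 0 ≤ t ∧ x < f t}

/-!
The inverse is continuous jointly in the function and the argument: if monotone `g i` converge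
pointwise to `f` and `z i → x`, then `rcInv (g i) (z i) → rcInv f x`. Indeed a point `s` with
`x < f s` also has `z i < g i s` eventually, which bounds the limit from above; for `s < rcInv f x`,
strict monotonicity of `f` gives `f s < x`, hence eventually `g i s < z i`, which bounds it from
below. Taking `g i = f` shows that `rcInv f` is continuous, and the joint convergence along
`l ×ˢ 𝓝 x` is then exactly local uniform convergence.
-/

section Inverse

variable {f : ℝ → ℝ} {x t b : ℝ}

theorem rcInv_nonneg (f : ℝ → ℝ) (x : ℝ) : 0 ≤ rcInv f x :=
  Real.sInf_nonneg fun _ hs => hs.1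

theorem rcInv_le (ht : 0 ≤ t) (h : x < f t) : rcInv f x ≤ t :=
  csInf_le ⟨0, fun _ hs => hs.1⟩ ⟨ht, h⟩

theorem le_of_lt_rcInv (ht : 0 ≤ t) (h : t < rcInv f x) : f t ≤ x :=
  not_lt.1 fun hx => h.not_ge (rcInv_le ht hx)

theorem exists_lt_of_rcInv_lt (hx : ∃ s, 0 ≤ s ∧ x < f s) (h : rcInv f x < b) :
    ∃ s, 0 ≤ s ∧ x < f s ∧ s < b := by
  obtain ⟨s, ⟨hs, hxs⟩, hsb⟩ := exists_lt_of_csInf_lt hx h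
  exact ⟨s, hs, hxs, hsb⟩

theorem le_rcInv (hf : MonotoneOn f (Ici 0)) (hx : ∃ s, 0 ≤ s ∧ x < f s) (ht : 0 ≤ t)
    (h : f t ≤ x) : t ≤ rcInv f x :=
  le_csInf hx fun _ ⟨hs, hxs⟩ => (hf.reflect_lt ht hs (h.trans_lt hxs)).le

theorem lt_of_lt_rcInv (hf : StrictMonoOn f (Ici 0)) (ht : 0 ≤ t) (h : t < rcInv f x) :
    f t < x := by
  obtain ⟨s, hts, hs⟩ := exists_between h
  have hs₀ : 0 ≤ s := ht.trans hts.le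
  exact (hf ht hs₀ hts).trans_le (le_of_lt_rcInv hs₀ hs)

end Inverse

section Convergence

variable {ι : Type*} {l : Filter ι} {f : ℝ → ℝ} {g : ι → ℝ → ℝ} {x a b : ℝ} {z : ι → ℝ}

theorem eventually_rcInv_lt (hx : ∃ s, 0 ≤ s ∧ x < f s)
    (hgf : ∀ t, 0 ≤ t → Tendsto (fun i => g i t) l (𝓝 (f t))) (hz : Tendsto z l (𝓝 x))
    (hb : rcInv f x < b) : ∀ᶠ i in l, rcInv (g i) (z i) < b := by
  obtain ⟨s, hs, hxs, hsb⟩ := exists_lt_of_rcInv_lt hx hb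
  filter_upwards [hz.eventually_lt (hgf s hs) hxs] with i hi
  exact (rcInv_le hs hi).trans_lt hsb

theorem eventually_lt_rcInv (hf : StrictMonoOn f (Ici 0)) (hg : ∀ i, MonotoneOn (g i) (Ici 0))
    (hx : ∃ s, 0 ≤ s ∧ x < f s)
    (hgf : ∀ t, 0 ≤ t → Tendsto (fun i => g i t) l (𝓝 (f t))) (hz : Tendsto z l (𝓝 x))
    (ha : a < rcInv f x) : ∀ᶠ i in l, a < rcInv (g i) (z i) := by
  rcases lt_or_ge a 0 with ha_neg | ha_nonneg
  · exact Eventually.of_forall fun i => ha_neg.trans_le (rcInv_nonneg (g i) (z i))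
  obtain ⟨s, has, hs⟩ := exists_between ha
  have hs₀ : 0 ≤ s := ha_nonneg.trans has.le
  obtain ⟨u, hu₀, hxu⟩ := hx
  filter_upwards [(hgf s hs₀).eventually_lt hz (lt_of_lt_rcInv hf hs₀ hs),
    hz.eventually_lt (hgf u hu₀) hxu] with i hgz hzg
  exact has.trans_le (le_rcInv (hg i) ⟨u, hu₀, hzg⟩ hs₀ hgz.le)

theorem tendsto_rcInv (hf : StrictMonoOn f (Ici 0)) (hg : ∀ i, MonotoneOn (g i) (Ici 0))
    (hx : ∃ s, 0 ≤ s ∧ x < f s)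
    (hgf : ∀ t, 0 ≤ t → Tendsto (fun i => g i t) l (𝓝 (f t))) (hz : Tendsto z l (𝓝 x)) :
    Tendsto (fun i => rcInv (g i) (z i)) l (𝓝 (rcInv f x)) :=
  tendsto_order.2 ⟨fun _ ha => eventually_lt_rcInv hf hg hx hgf hz ha,
    fun _ hb => eventually_rcInv_lt hx hgf hz hb⟩

theorem continuousAt_rcInv (hf : StrictMonoOn f (Ici 0)) (hx : ∃ s, 0 ≤ s ∧ x < f s) :
    ContinuousAt (rcInv f) x :=
  tendsto_rcInv hf (fun _ => hf.monotoneOn) hx (fun _ _ => tendsto_const_nhds) tendsto_id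

theorem stmt1_general (hf : StrictMonoOn f (Ici 0)) (hf_unbdd : ∀ M, ∃ s, 0 ≤ s ∧ M < f s)
    (hg : ∀ i, MonotoneOn (g i) (Ici 0))
    (hgf : ∀ t, 0 ≤ t → Tendsto (fun i => g i t) l (𝓝 (f t))) :
    TendstoLocallyUniformly (fun i => rcInv (g i)) (rcInv f) l := by
  refine tendstoLocallyUniformly_iff_forall_tendsto.2 fun x => ?_
  have h_inv : Tendsto (fun p : ι × ℝ => rcInv f p.2) (l ×ˢ 𝓝 x) (𝓝 (rcInv f x)) :=
    (continuousAt_rcInv hf (hf_unbdd x)).tendsto.comp tendsto_snd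
  have h_joint : Tendsto (fun p : ι × ℝ => rcInv (g p.1) p.2) (l ×ˢ 𝓝 x) (𝓝 (rcInv f x)) :=
    tendsto_rcInv hf (fun p => hg p.1) (hf_unbdd x)
      (fun t ht => (hgf t ht).comp tendsto_fst) tendsto_snd
  exact (h_inv.prodMk_nhds h_joint).mono_right (nhds_le_uniformity _)

end Convergence

/-- If `fn` are non-decreasing, unbounded, right-continuous functions
`[0,∞) → [0,∞)` converging locally uniformly to such a function `f` which is strictly
increasing, then the right-continuous inverses converge locally uniformly:
for every `y ≥ 0`, `sup_{0 ≤ x ≤ y} |fn→(x) − f→(x)| → 0`. -/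
theorem stmt1 (f : ℝ → ℝ) (fn : ℕ → ℝ → ℝ)
    (hf : IsNDRC f) (hfn : ∀ n, IsNDRC (fn n))
    (hstrict : StrictMonoOn f (Set.Ici 0))
    (hconv : ∀ t : ℝ, 0 ≤ t → TendstoUniformlyOn fn f atTop (Set.Icc 0 t)) :
    ∀ y : ℝ, 0 ≤ y →
      TendstoUniformlyOn (fun n => rcInv (fn n)) (rcInv f) atTop (Set.Icc 0 y) := by
  have h_lim := stmt1_general hstrict hf.2.2.1 (fun n => (hfn n).2.1)
    fun t ht => (hconv t ht).tendsto_at ⟨ht, le_rfl⟩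
  exact fun y _ => (tendstoLocallyUniformlyOn_iff_tendstoUniformlyOn_of_compact isCompact_Icc).1
    h_lim.tendstoLocallyUniformlyOn
end

section
/- Let f, f_n : [0,∞) → [0,∞) (n ∈ ℕ) be non-decreasing, unbounded, right-continuous functions, and assume f is strictly increasing. Let F and F_n denote the closed ranges of f and f_n respectively. If f_n converges to f locally uniformly, then for every sequence of real numbers x_n → x one has ρ(x_n, F_n) → ρ(x, F) as n → ∞. -/
open Set Filter Metric Topology

/-- The closed range `F = closure {f t : t ≥ 0}`. -/
def crange (f : ℝ → ℝ) : Set ℝ := closure (f '' Set.Ici 0)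

/- For a monotone function `g`, the values taken beyond a parameter `t` with `x ≤ g t` are at least
as far from `x` as `g t`, so `ρ(x, ·)` only sees the values of `g` up to `t`. If `x < f t`, this
truncation applies to `f` at `x` and, eventually, to `f_n` at `x_n`; up to `t` the convergence is
uniform, and there the distance to the image depends continuously on the point and the function. -/

section PseudoMetric

variable {α ι E : Type*} [PseudoMetricSpace E] {s : Set α} {x y : E}

theorem infDist_image_le_infDist_image_add {f g : α → E} {ε : ℝ} (hs : s.Nonempty)
    (hfg : ∀ a ∈ s, dist (f a) (g a) ≤ ε) :
    infDist x (f '' s) ≤ infDist y (g '' s) + (dist x y + ε) := by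
  rw [← sub_le_iff_le_add, le_infDist (hs.image g)]
  rintro _ ⟨a, ha, rfl⟩
  rw [sub_le_iff_le_add]
  calc
    infDist x (f '' s) ≤ dist x (f a) := infDist_le_dist_of_mem (mem_image_of_mem f ha)
    _ ≤ dist x y + dist y (g a) + dist (g a) (f a) := dist_triangle4 ..
    _ ≤ dist x y + dist y (g a) + ε := by
      rw [dist_comm (g a)]
      gcongr
      exact hfg a ha
    _ = dist y (g a) + (dist x y + ε) := by ring

theorem dist_infDist_image_le_dist_add {f g : α → E} {ε : ℝ} (hs : s.Nonempty)
    (hfg : ∀ a ∈ s, dist (f a) (g a) ≤ ε) :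
    dist (infDist x (f '' s)) (infDist y (g '' s)) ≤ dist x y + ε := by
  have hxy := infDist_image_le_infDist_image_add (x := x) (y := y) hs hfg
  have hyx := infDist_image_le_infDist_image_add (x := y) (y := x) hs
    fun a ha ↦ (dist_comm (g a) (f a)).trans_le (hfg a ha)
  rw [dist_comm y x] at hyx
  rw [Real.dist_eq, abs_sub_le_iff]
  constructor <;> linarith

theorem tendsto_infDist_image_of_tendstoUniformlyOn {l : Filter ι} {F : ι → α → E} {f : α → E}
    {u : ι → E} (hF : TendstoUniformlyOn F f l s) (hu : Tendsto u l (𝓝 x)) :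
    Tendsto (fun i ↦ infDist (u i) (F i '' s)) l (𝓝 (infDist x (f '' s))) := by
  obtain rfl | hs := s.eq_empty_or_nonempty
  · simp only [image_empty, infDist_empty, tendsto_const_nhds]
  refine Metric.tendsto_nhds.2 fun ε hε ↦ ?_
  filter_upwards [Metric.tendsto_nhds.1 hu (ε / 2) (half_pos hε),
    Metric.tendstoUniformlyOn_iff.1 hF (ε / 2) (half_pos hε)] with i hui hFi
  calc
    dist (infDist (u i) (F i '' s)) (infDist x (f '' s)) ≤ dist (u i) x + ε / 2 :=
      dist_infDist_image_le_dist_add hs fun a ha ↦ (dist_comm (F i a) (f a)).trans_le (hFi a ha).le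
    _ < ε := by linarith

end PseudoMetric

section MonotoneOn

variable {α ι : Type*} [LinearOrder α] {s : Set α} {t : α} {x : ℝ}

theorem infDist_image_inter_Iic_of_monotoneOn {g : α → ℝ} (hg : MonotoneOn g s) (ht : t ∈ s)
    (hx : x ≤ g t) : infDist x (g '' (s ∩ Iic t)) = infDist x (g '' s) := by
  have ht' : t ∈ s ∩ Iic t := ⟨ht, le_rfl⟩
  refine le_antisymm ((le_infDist ⟨g t, mem_image_of_mem g ht⟩).2 ?_)
    (infDist_le_infDist_of_subset (image_mono inter_subset_left) ⟨g t, mem_image_of_mem g ht'⟩)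
  rintro _ ⟨r, hr, rfl⟩
  obtain hrt | htr := le_total r t
  · exact infDist_le_dist_of_mem (mem_image_of_mem g ⟨hr, hrt⟩)
  · calc
      infDist x (g '' (s ∩ Iic t)) ≤ dist x (g t) :=
        infDist_le_dist_of_mem (mem_image_of_mem g ht')
      _ ≤ dist x (g r) :=
        Real.dist_left_le_of_mem_uIcc (mem_uIcc_of_le hx (hg ht hr htr))

theorem tendsto_infDist_image_of_monotoneOn {l : Filter ι} {F : ι → α → ℝ} {f : α → ℝ}
    {u : ι → ℝ} (hF : ∀ᶠ i in l, MonotoneOn (F i) s) (hf : MonotoneOn f s) (ht : t ∈ s)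
    (hxt : x < f t) (hconv : TendstoUniformlyOn F f l (s ∩ Iic t)) (hu : Tendsto u l (𝓝 x)) :
    Tendsto (fun i ↦ infDist (u i) (F i '' s)) l (𝓝 (infDist x (f '' s))) := by
  have hFt : Tendsto (F · t) l (𝓝 (f t)) := hconv.tendsto_at ⟨ht, le_rfl⟩
  rw [← infDist_image_inter_Iic_of_monotoneOn hf ht hxt.le]
  refine (tendsto_infDist_image_of_tendstoUniformlyOn hconv hu).congr' ?_
  filter_upwards [hF, hu.eventually_lt hFt hxt] with i hFi hui
  exact infDist_image_inter_Iic_of_monotoneOn hFi ht hui.le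

theorem stmt2_general {l : Filter ι} {F : ι → α → ℝ} {f : α → ℝ} {u : ι → ℝ}
    (hF : ∀ᶠ i in l, MonotoneOn (F i) s) (hf : ¬BddAbove (f '' s))
    (hconv : ∀ t ∈ s, TendstoUniformlyOn F f l (s ∩ Iic t)) (hu : Tendsto u l (𝓝 x)) :
    Tendsto (fun i ↦ infDist (u i) (closure (F i '' s))) l (𝓝 (infDist x (closure (f '' s)))) := by
  obtain rfl | _ := l.eq_or_neBot
  · exact tendsto_bot
  have hf_mono : MonotoneOn f s := monotoneOn_of_frequently_monotoneOn_of_tendsto hF.frequently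
    fun t ht ↦ (hconv t ht).tendsto_at ⟨ht, le_rfl⟩
  obtain ⟨_, ⟨t, ht, rfl⟩, hxt⟩ := not_bddAbove_iff.1 hf x
  simp only [infDist_closure]
  exact tendsto_infDist_image_of_monotoneOn hF hf_mono ht hxt (hconv t ht) hu

end MonotoneOn

/-- If `fn` are non-decreasing, unbounded, right-continuous functions
`[0,∞) → [0,∞)` converging locally uniformly to such a function `f` which is strictly
increasing, and `xn → x`, then `ρ(xn, Fn) → ρ(x, F)` where `Fn`, `F` are the closed ranges. -/
theorem stmt2 (f : ℝ → ℝ) (fn : ℕ → ℝ → ℝ)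
    (hf : IsNDRC f) (hfn : ∀ n, IsNDRC (fn n))
    (hstrict : StrictMonoOn f (Set.Ici 0))
    (hconv : ∀ t : ℝ, 0 ≤ t → TendstoUniformlyOn fn f atTop (Set.Icc 0 t)) :
    ∀ (x : ℝ) (xn : ℕ → ℝ), Tendsto xn atTop (𝓝 x) →
      Tendsto (fun n => Metric.infDist (xn n) (crange (fn n))) atTop
        (𝓝 (Metric.infDist x (crange f))) := by
  intro x xn hx
  have hf_unbdd : ¬BddAbove (f '' Ici 0) :=
    not_bddAbove_iff.2 fun M ↦ exists_mem_image.2 (hf.2.2.1 M)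
  exact stmt2_general (.of_forall fun n ↦ (hfn n).2.1) hf_unbdd hconv hx
end

section
/- Let f, f_n : [0,∞) → [0,∞) (n ∈ ℕ) be non-decreasing, unbounded, right-continuous functions, and let F and F_n denote the closed ranges of f and f_n respectively. If f_n converges to f locally uniformly, then for every x ∈ ℝ, limsup_{n→∞} ρ(x, F_n) ≤ ρ(x, F). -/
open Set Filter Metric Topology

theorem limsup_infDist_le_dist_of_tendsto {ι X : Type*} [PseudoMetricSpace X] {l : Filter ι}
    [l.NeBot] {s : ι → Set X} {u : ι → X} {y : X} (hus : ∀ᶠ i in l, u i ∈ s i)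
    (huy : Tendsto u l (𝓝 y)) (x : X) :
    limsup (fun i => infDist x (s i)) l ≤ dist x y := by
  have hdist : Tendsto (fun i => dist x (u i)) l (𝓝 (dist x y)) := tendsto_const_nhds.dist huy
  calc limsup (fun i => infDist x (s i)) l
      ≤ limsup (fun i => dist x (u i)) l :=
        limsup_le_limsup (hus.mono fun _ hi => infDist_le_dist_of_mem hi)
          (isCoboundedUnder_le_of_le l fun _ => infDist_nonneg) hdist.isBoundedUnder_le
    _ = dist x y := hdist.limsup_eq

theorem stmt3_general {ι α X : Type*} [PseudoMetricSpace X] {l : Filter ι} [l.NeBot]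
    {F : ι → α → X} {f : α → X} {S : Set α} (hS : S.Nonempty)
    (hconv : ∀ t ∈ S, Tendsto (fun i => F i t) l (𝓝 (f t))) (x : X) :
    limsup (fun i => infDist x (closure (F i '' S))) l ≤ infDist x (closure (f '' S)) := by
  simp only [infDist_closure]
  rw [le_infDist (hS.image f), forall_mem_image]
  intro t ht
  exact limsup_infDist_le_dist_of_tendsto
    (Eventually.of_forall fun i => mem_image_of_mem (F i) ht) (hconv t ht) x

/-- If `fn` are non-decreasing, unbounded, right-continuous functions
`[0,∞) → [0,∞)` converging locally uniformly to such a function `f`, then for every `x`,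
`limsup_n ρ(x, Fn) ≤ ρ(x, F)`. -/
theorem stmt3 (f : ℝ → ℝ) (fn : ℕ → ℝ → ℝ)
    (hf : IsNDRC f) (hfn : ∀ n, IsNDRC (fn n))
    (hconv : ∀ t : ℝ, 0 ≤ t → TendstoUniformlyOn fn f atTop (Set.Icc 0 t)) :
    ∀ x : ℝ,
      Filter.limsup (fun n => Metric.infDist x (crange (fn n))) atTop
        ≤ Metric.infDist x (crange f) :=
  stmt3_general nonempty_Ici fun t ht => (hconv t ht).tendsto_at (right_mem_Icc.2 ht)
end

section
/- Let f : [0,∞) → [0,∞) be a non-decreasing, unbounded, right-continuous function with closed range F, let x ∈ ℝ and δ > 0, and suppose ρ(x, F) > δ. Then either x < f(0) − δ, or there exists t > 0 such that f(t−) + δ < x < f(t) − δ, where f(t−) := lim_{s↑t} f(s) denotes the left limit of f at t. -/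
open Set Filter Metric Topology Function

/-!
Let `T` be the infimum of the times `t ≥ 0` with `f t > x`. Before `T` the values of `f` are
at most `x`, and by right-continuity `f T ≥ x`. Every value of `f` is at distance at least
`ρ(x, F) > δ` from `x`, so the first bound improves to `f ≤ x - ρ(x, F)` before `T`, hence for the
left limit at `T`, and the second to `f T ≥ x + ρ(x, F)`. The two alternatives are `T = 0` and
`T > 0`.
-/

/-- The first passage time of `f` strictly above the level `x`, starting from `a`. For a
non-decreasing right-continuous `f` and `a = 0` this is the right-continuous inverse `f→(x)`.
If `f` never exceeds `x` on `[a, ∞)`, the infimum is over `∅` and the value carries no meaning. -/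
noncomputable def passageTime {α β : Type*} [ConditionallyCompleteLinearOrder α] [LT β]
    (f : α → β) (a : α) (x : β) : α :=
  sInf {t | a ≤ t ∧ x < f t}

section PassageTime

variable {α β : Type*} [ConditionallyCompleteLinearOrder α] [LinearOrder β]
  {f : α → β} {a t : α} {x : β}

theorem le_passageTime (hx : ∃ s, a ≤ s ∧ x < f s) : a ≤ passageTime f a x :=
  le_csInf hx fun _ hs ↦ hs.1

theorem apply_le_of_lt_passageTime (hat : a ≤ t) (ht : t < passageTime f a x) : f t ≤ x :=
  not_lt.mp fun hxt ↦ notMem_of_lt_csInf ht ⟨a, fun _ hs ↦ hs.1⟩ ⟨hat, hxt⟩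

theorem le_apply_passageTime [TopologicalSpace α] [OrderTopology α] [TopologicalSpace β]
    [ClosedIciTopology β] (hx : ∃ s, a ≤ s ∧ x < f s)
    (hf : ContinuousWithinAt f (Ici (passageTime f a x)) (passageTime f a x)) :
    x ≤ f (passageTime f a x) := by
  have hbdd : BddBelow {s | a ≤ s ∧ x < f s} := ⟨a, fun _ hs ↦ hs.1⟩
  have hmem : f (passageTime f a x) ∈ closure (Ici x) :=
    (hf.mono fun _ hs ↦ csInf_le hbdd hs).mem_closure (csInf_mem_closure hx hbdd)
      fun _ hs ↦ hs.2.le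
  rwa [closure_Ici] at hmem

end PassageTime

section LeftLimit

variable {α β : Type*} [LinearOrder α] [TopologicalSpace α] [OrderTopology α] [DenselyOrdered α]
  [TopologicalSpace β] {f : α → β} {a t : α}

theorem exists_tendsto_nhdsLT_of_monotoneOn_Icc [ConditionallyCompleteLinearOrder β]
    [OrderTopology β] (hf : MonotoneOn f (Icc a t)) (hat : a < t) :
    ∃ l, Tendsto f (𝓝[<] t) (𝓝 l) := by
  have hbdd : BddAbove (f '' Ioo a t) := by
    refine ⟨f t, ?_⟩
    rintro _ ⟨s, hs, rfl⟩
    exact hf (Ioo_subset_Icc_self hs) (right_mem_Icc.mpr hat.le) hs.2.le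
  exact ⟨_, (hf.mono Ioo_subset_Icc_self).tendsto_nhdsWithin_Ioo_left (nonempty_Ioo.mpr hat) hbdd⟩

theorem leftLim_le_of_forall_Ico_le [Preorder β] [ClosedIicTopology β] {c : β}
    (hlim : ∃ l, Tendsto f (𝓝[<] t) (𝓝 l)) (hat : a < t) (hc : ∀ s ∈ Ico a t, f s ≤ c) :
    leftLim f t ≤ c :=
  have : (𝓝[<] t).NeBot := nhdsLT_neBot_of_exists_lt ⟨a, hat⟩
  le_of_tendsto (tendsto_leftLim_of_tendsto hlim) (mem_of_superset (Ico_mem_nhdsLT hat) hc)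

end LeftLimit

section DistanceToSet

variable {S : Set ℝ} {x y : ℝ}

theorem le_sub_infDist_of_mem_of_le (hy : y ∈ S) (hyx : y ≤ x) : y ≤ x - infDist x S := by
  have h := infDist_le_dist_of_mem (x := x) hy
  rw [Real.dist_eq, abs_of_nonneg (sub_nonneg.mpr hyx)] at h
  linarith

theorem add_infDist_le_of_mem_of_le (hy : y ∈ S) (hxy : x ≤ y) : x + infDist x S ≤ y := by
  have h := infDist_le_dist_of_mem (x := x) hy
  rw [Real.dist_eq, abs_of_nonpos (sub_nonpos.mpr hxy)] at h
  linarith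

end DistanceToSet

theorem stmt5_general {α : Type*} [ConditionallyCompleteLinearOrder α] [TopologicalSpace α]
    [OrderTopology α] [DenselyOrdered α] {f : α → ℝ} {a : α} {x δ : ℝ}
    (hright : ∀ t, a ≤ t → ContinuousWithinAt f (Ici t) t)
    (hleft : ∀ t, a < t → ∃ l, Tendsto f (𝓝[<] t) (𝓝 l))
    (hx : ∃ t, a ≤ t ∧ x < f t) (hdist : δ < infDist x (f '' Ici a)) :
    x < f a - δ ∨ ∃ t, a < t ∧ leftLim f t + δ < x ∧ x < f t - δ := by
  set T := passageTime f a x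
  have haT : a ≤ T := le_passageTime hx
  have hxT : x + infDist x (f '' Ici a) ≤ f T :=
    add_infDist_le_of_mem_of_le (mem_image_of_mem f haT) (le_apply_passageTime hx (hright T haT))
  obtain haT_eq | haT_lt := haT.eq_or_lt
  · left
    rw [haT_eq]
    linarith
  · have hbefore : ∀ s ∈ Ico a T, f s ≤ x - infDist x (f '' Ici a) := fun s hs ↦
      le_sub_infDist_of_mem_of_le (mem_image_of_mem f hs.1) (apply_le_of_lt_passageTime hs.1 hs.2)
    have hleftLim := leftLim_le_of_forall_Ico_le (hleft T haT_lt) haT_lt hbefore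
    exact Or.inr ⟨T, haT_lt, by linarith, by linarith⟩

/-- Let `f` be a non-decreasing, unbounded, right-continuous function
`[0,∞) → [0,∞)` with closed range `F`, let `x ∈ ℝ` and `δ > 0`, and suppose
`ρ(x, F) > δ`.  Then either `x < f 0 − δ`, or there exists `t > 0` such that
`f(t−) + δ < x < f(t) − δ`, where `f(t−)` is the left limit of `f` at `t`. -/
theorem stmt5 (f : ℝ → ℝ) (hf : IsNDRC f) (x δ : ℝ) (hδ : 0 < δ)
    (hdist : δ < Metric.infDist x (crange f)) :
    x < f 0 - δ ∨ ∃ t : ℝ, 0 < t ∧ Function.leftLim f t + δ < x ∧ x < f t - δ := by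
  obtain ⟨-, hmono, hunbdd, hright⟩ := hf
  rw [crange, infDist_closure] at hdist
  exact stmt5_general hright (fun t ht ↦ exists_tendsto_nhdsLT_of_monotoneOn_Icc
    (hmono.mono Icc_subset_Ici_self) ht) (hunbdd x) hdist
end

section
/- Let j ∈ ℕ, α > 0, and let Γ be a random variable with the Gamma(j,1) distribution. Let A ≥ 0 be a random variable independent of Γ with E[A^{jα+δ}] < ∞ for some δ > 0. Then lim_{x→∞} x^{jα} · P(A·Γ^{−1/α} > x) = E[A^{jα}]/j!. -/
open Set Filter Topology MeasureTheory ProbabilityTheory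

/-!
Conditionally on `A`, the event `A * Y > x` is `Y > x / A`, so a power tail `x ^ p * P(Y > x) → c`
gives `x ^ p * P(A * Y > x | A) → A ^ p * c`. The function `x ^ p * P(Y > x)` is bounded on
`(0, ∞)`, hence `A ^ p` dominates up to a constant and the limit passes through the expectation
(Breiman's lemma). For `Y = Γ ^ (-1 / α)` the tail at infinity is the distribution function of `Γ`
at `0`, where the density `r ^ a / Γ(a) * u ^ (a - 1) * e ^ (-r u)` integrates to
`t ^ a * r ^ a / Γ(a + 1)` to leading order.
-/

section ProductTail

variable {Ω : Type*} [MeasurableSpace Ω] {μ : Measure Ω}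

theorem measureReal_setOf_prodMk_mem_of_indepFun {𝓧 𝓨 : Type*} [MeasurableSpace 𝓧]
    [MeasurableSpace 𝓨] [IsFiniteMeasure μ] {X : Ω → 𝓧} {Y : Ω → 𝓨} (hX : AEMeasurable X μ)
    (hY : AEMeasurable Y μ) (hXY : IndepFun X Y μ) {s : Set (𝓧 × 𝓨)} (hs : MeasurableSet s) :
    μ.real {ω | (X ω, Y ω) ∈ s} = ∫ ω, (μ.map Y).real (Prod.mk (X ω) ⁻¹' s) ∂μ := by
  have hslice : Measurable fun a => μ.map Y (Prod.mk a ⁻¹' s) := measurable_measure_prodMk_left hs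
  calc μ.real {ω | (X ω, Y ω) ∈ s} = ((μ.map X).prod (μ.map Y)).real s := by
        rw [← hXY.map_prod_eq_prod_map_map hX hY,
          map_measureReal_apply_of_aemeasurable (hX.prodMk hY) hs]
        rfl
    _ = ∫ ω, (μ.map Y).real (Prod.mk (X ω) ⁻¹' s) ∂μ := by
        simp only [measureReal_def]
        rw [Measure.prod_apply hs, lintegral_map' hslice.aemeasurable hX]
        exact (integral_toReal (hslice.comp_aemeasurable hX)
          (ae_of_all _ fun _ => measure_lt_top _ _)).symm

variable {ν : Measure ℝ} {p c : ℝ}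

theorem exists_forall_rpow_mul_measureReal_Ioi_le [IsFiniteMeasure ν] (hp : 0 ≤ p)
    (hν : Tendsto (fun x => x ^ p * ν.real (Ioi x)) atTop (𝓝 c)) :
    ∃ M, ∀ x, 0 < x → x ^ p * ν.real (Ioi x) ≤ M := by
  obtain ⟨K, hK⟩ := hν.isBoundedUnder_le
  obtain ⟨x₀, hx₀⟩ := eventually_atTop.1 (eventually_map.1 hK)
  refine ⟨max K (x₀ ^ p * ν.real univ), fun x hx => ?_⟩
  rcases le_total x₀ x with hlarge | hsmall
  · exact le_max_of_le_left (hx₀ x hlarge)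
  · have hx₀_pos : 0 < x₀ := hx.trans_le hsmall
    have hmass : ν.real (Ioi x) ≤ ν.real univ := measureReal_mono (subset_univ _)
    exact le_max_of_le_right (by gcongr)

theorem rpow_mul_measureReal_lt_const_mul (hp : p ≠ 0) {b x : ℝ} (hb : 0 ≤ b) (hx : 0 < x) :
    x ^ p * ν.real {y | x < b * y} = b ^ p * ((x / b) ^ p * ν.real (Ioi (x / b))) := by
  rcases hb.eq_or_lt with rfl | hb
  · -- Here `x / b` has the junk value `0`, harmless because `0 ^ p = 0`.
    simp [Real.zero_rpow hp, hx.not_gt]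
  · have hset : {y | x < b * y} = Ioi (x / b) := by
      ext y
      exact (div_lt_iff₀' hb).symm
    rw [hset, Real.div_rpow hx.le hb.le]
    field_simp

theorem tendsto_rpow_mul_measureReal_lt_const_mul (hp : p ≠ 0)
    (hν : Tendsto (fun x => x ^ p * ν.real (Ioi x)) atTop (𝓝 c)) {b : ℝ} (hb : 0 ≤ b) :
    Tendsto (fun x => x ^ p * ν.real {y | x < b * y}) atTop (𝓝 (b ^ p * c)) := by
  have hscale : (fun x => b ^ p * ((x / b) ^ p * ν.real (Ioi (x / b)))) =ᶠ[atTop]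
      fun x => x ^ p * ν.real {y | x < b * y} := by
    filter_upwards [eventually_gt_atTop 0] with x hx
    exact (rpow_mul_measureReal_lt_const_mul hp hb hx).symm
  refine Tendsto.congr' hscale ?_
  rcases hb.eq_or_lt with rfl | hb
  · simp [Real.zero_rpow hp]
  · exact (hν.comp (tendsto_id.atTop_div_const hb)).const_mul _

theorem tendsto_integral_rpow_mul_measureReal_lt_mul [IsFiniteMeasure ν] (hp : 0 < p)
    (hν : Tendsto (fun x => x ^ p * ν.real (Ioi x)) atTop (𝓝 c)) {A : Ω → ℝ}
    (hA : AEMeasurable A μ) (hA_nonneg : ∀ᵐ ω ∂μ, 0 ≤ A ω)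
    (hA_int : Integrable (fun ω => A ω ^ p) μ) :
    Tendsto (fun x => ∫ ω, x ^ p * ν.real {y | x < A ω * y} ∂μ) atTop
      (𝓝 ((∫ ω, A ω ^ p ∂μ) * c)) := by
  obtain ⟨M, hM⟩ := exists_forall_rpow_mul_measureReal_Ioi_le hp.le hν
  rw [← integral_mul_const]
  refine tendsto_integral_filter_of_dominated_convergence (fun ω => A ω ^ p * M) ?_ ?_
    (hA_int.mul_const M) ?_
  · refine Eventually.of_forall fun x => AEMeasurable.aestronglyMeasurable ?_
    have hslice : Measurable fun b : ℝ => ν {y | x < b * y} :=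
      measurable_measure_prodMk_left
        (measurableSet_lt measurable_const (measurable_fst.mul measurable_snd))
    exact (hslice.comp_aemeasurable hA).ennreal_toReal.const_mul _
  · filter_upwards [eventually_gt_atTop 0] with x hx
    filter_upwards [hA_nonneg] with ω hω
    rw [Real.norm_of_nonneg (by positivity), rpow_mul_measureReal_lt_const_mul hp.ne' hω hx]
    rcases hω.eq_or_lt with hzero | hpos
    · simp [← hzero, Real.zero_rpow hp.ne']
    · gcongr
      exact hM _ (div_pos hx hpos)
  · filter_upwards [hA_nonneg] with ω hω
    exact tendsto_rpow_mul_measureReal_lt_const_mul hp.ne' hν hω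

theorem tendsto_rpow_mul_measureReal_lt_mul_of_indepFun [IsFiniteMeasure μ] (hp : 0 < p)
    {A Y : Ω → ℝ} (hA : AEMeasurable A μ) (hA_nonneg : ∀ᵐ ω ∂μ, 0 ≤ A ω)
    (hA_int : Integrable (fun ω => A ω ^ p) μ) (hY : AEMeasurable Y μ) (hAY : IndepFun A Y μ)
    (hY_tail : Tendsto (fun x => x ^ p * μ.real {ω | x < Y ω}) atTop (𝓝 c)) :
    Tendsto (fun x => x ^ p * μ.real {ω | x < A ω * Y ω}) atTop
      (𝓝 ((∫ ω, A ω ^ p ∂μ) * c)) := by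
  have hmap_tail : Tendsto (fun x => x ^ p * (μ.map Y).real (Ioi x)) atTop (𝓝 c) := by
    simp only [map_measureReal_apply_of_aemeasurable hY measurableSet_Ioi]
    exact hY_tail
  refine (tendsto_integral_rpow_mul_measureReal_lt_mul hp hmap_tail hA hA_nonneg
    hA_int).congr fun x => ?_
  have hs : MeasurableSet {z : ℝ × ℝ | x < z.1 * z.2} :=
    measurableSet_lt measurable_const (measurable_fst.mul measurable_snd)
  rw [integral_const_mul]
  exact congrArg _ (measureReal_setOf_prodMk_mem_of_indepFun hA hY hAY hs).symm

end ProductTail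

section NegativePower

variable {ν : Measure ℝ} {a c α : ℝ}

theorem measureReal_lt_rpow_neg_inv (hν : ∀ᵐ g ∂ν, 0 < g) (hα : 0 < α) {x : ℝ} (hx : 0 < x) :
    ν.real {g | x < g ^ (-(1 / α))} = ν.real (Iio (x ^ (-α))) := by
  refine measureReal_congr ?_
  filter_upwards [hν] with g hg
  rw [one_div, ← inv_neg]
  exact propext (Real.lt_rpow_inv_iff_of_neg hx hg (neg_neg_of_pos hα))

theorem tendsto_rpow_mul_measureReal_lt_rpow_neg_inv (hν : ∀ᵐ g ∂ν, 0 < g) (hα : 0 < α)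
    (h_zero : Tendsto (fun t => t ^ (-a) * ν.real (Iio t)) (𝓝[>] 0) (𝓝 c)) :
    Tendsto (fun x => x ^ (a * α) * ν.real {g | x < g ^ (-(1 / α))}) atTop (𝓝 c) := by
  have hsubst : Tendsto (fun x : ℝ => x ^ (-α)) atTop (𝓝[>] 0) :=
    tendsto_nhdsWithin_iff.2 ⟨tendsto_rpow_neg_atTop hα,
      (eventually_gt_atTop 0).mono fun _ hx => Real.rpow_pos_of_pos hx _⟩
  refine (h_zero.comp hsubst).congr' ?_
  filter_upwards [eventually_gt_atTop 0] with x hx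
  rw [Function.comp_apply, measureReal_lt_rpow_neg_inv hν hα hx, ← Real.rpow_mul hx.le,
    neg_mul_neg, mul_comm α]

end NegativePower

section GammaNearZero

variable {a r t : ℝ}

theorem ae_gammaMeasure_pos (a r : ℝ) : ∀ᵐ g ∂gammaMeasure a r, 0 < g := by
  have hnonpos : gammaMeasure a r (Iic 0) = 0 := by
    rw [gammaMeasure, withDensity_apply _ measurableSet_Iic,
      setLIntegral_congr Iio_ae_eq_Iic.symm, lintegral_gammaPDF_of_nonpos le_rfl]
  filter_upwards [measure_eq_zero_iff_ae_notMem.1 hnonpos] with g hg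
  exact not_le.1 hg

theorem measureReal_gammaMeasure_Iio (ha : 0 < a) (hr : 0 < r) (ht : 0 ≤ t) :
    (gammaMeasure a r).real (Iio t)
      = r ^ a / Real.Gamma a * ∫ u in 0..t, u ^ (a - 1) * Real.exp (-(r * u)) := by
  have := isProbabilityMeasure_gammaMeasure ha hr
  have hIio : (Iio t : Set ℝ) =ᵐ[gammaMeasure a r] Iic t :=
    (withDensity_absolutelyContinuous _ _).ae_le Iio_ae_eq_Iic
  have hpdf : ∀ u ∈ Iic t \ Icc 0 t, gammaPDFReal a r u = 0 := fun u hu =>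
    if_neg fun hu_nonneg => hu.2 ⟨hu_nonneg, hu.1⟩
  rw [measureReal_congr hIio, ← cdf_eq_real, cdf_gammaMeasure_eq_integral ha hr,
    setIntegral_eq_of_subset_of_forall_sdiff_eq_zero measurableSet_Iic Icc_subset_Iic_self hpdf,
    integral_Icc_eq_integral_Ioc, ← intervalIntegral.integral_of_le ht,
    ← intervalIntegral.integral_const_mul]
  refine intervalIntegral.integral_congr fun u hu => ?_
  rw [uIcc_of_le ht] at hu
  simp only [gammaPDFReal, if_pos hu.1, mul_assoc]

theorem integral_rpow_sub_one (ha : 0 < a) (t : ℝ) : ∫ u in 0..t, u ^ (a - 1) = t ^ a / a := by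
  rw [integral_rpow (Or.inl (by linarith)), sub_add_cancel, Real.zero_rpow ha.ne', sub_zero]

theorem intervalIntegrable_rpow_sub_one_mul_exp (ha : 0 < a) (r t : ℝ) :
    IntervalIntegrable (fun u => u ^ (a - 1) * Real.exp (-(r * u))) volume 0 t :=
  (intervalIntegral.intervalIntegrable_rpow' (by linarith)).mul_continuousOn (by fun_prop)

theorem integral_rpow_sub_one_mul_exp_le (ha : 0 < a) (hr : 0 ≤ r) (ht : 0 ≤ t) :
    ∫ u in 0..t, u ^ (a - 1) * Real.exp (-(r * u)) ≤ t ^ a / a := by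
  rw [← integral_rpow_sub_one ha]
  refine intervalIntegral.integral_mono_on ht (intervalIntegrable_rpow_sub_one_mul_exp ha r t)
    (intervalIntegral.intervalIntegrable_rpow' (by linarith)) fun u hu => ?_
  exact mul_le_of_le_one_right (Real.rpow_nonneg hu.1 _)
    (Real.exp_le_one_iff.2 (neg_nonpos.2 (mul_nonneg hr hu.1)))

theorem le_integral_rpow_sub_one_mul_exp (ha : 0 < a) (hr : 0 ≤ r) (ht : 0 ≤ t) :
    t ^ a / a * Real.exp (-(r * t)) ≤ ∫ u in 0..t, u ^ (a - 1) * Real.exp (-(r * u)) := by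
  rw [← integral_rpow_sub_one ha, ← intervalIntegral.integral_mul_const]
  refine intervalIntegral.integral_mono_on ht
    ((intervalIntegral.intervalIntegrable_rpow' (by linarith)).mul_const _)
    (intervalIntegrable_rpow_sub_one_mul_exp ha r t) fun u hu => ?_
  have hu_nonneg : 0 ≤ u := hu.1
  have hut : u ≤ t := hu.2
  gcongr

theorem tendsto_rpow_neg_mul_integral_rpow_sub_one_mul_exp (ha : 0 < a) (hr : 0 ≤ r) :
    Tendsto (fun t => t ^ (-a) * ∫ u in 0..t, u ^ (a - 1) * Real.exp (-(r * u))) (𝓝[>] 0)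
      (𝓝 a⁻¹) := by
  have hnormalize : ∀ {t : ℝ}, 0 < t → t ^ (-a) * (t ^ a / a) = a⁻¹ := fun {t} ht => by
    rw [← mul_div_assoc, ← Real.rpow_add ht, neg_add_cancel, Real.rpow_zero, one_div]
  have hlower : Tendsto (fun t => a⁻¹ * Real.exp (-(r * t))) (𝓝[>] 0) (𝓝 a⁻¹) := by
    have hcont : Continuous fun t => a⁻¹ * Real.exp (-(r * t)) := by fun_prop
    simpa using (hcont.tendsto 0).mono_left nhdsWithin_le_nhds
  refine tendsto_of_tendsto_of_tendsto_of_le_of_le' hlower tendsto_const_nhds ?_ ?_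
  · filter_upwards [self_mem_nhdsWithin] with t (ht : 0 < t)
    rw [← hnormalize ht, mul_assoc]
    gcongr
    exact le_integral_rpow_sub_one_mul_exp ha hr ht.le
  · filter_upwards [self_mem_nhdsWithin] with t (ht : 0 < t)
    rw [← hnormalize ht]
    gcongr
    exact integral_rpow_sub_one_mul_exp_le ha hr ht.le

theorem tendsto_rpow_neg_mul_measureReal_gammaMeasure_Iio (ha : 0 < a) (hr : 0 < r) :
    Tendsto (fun t => t ^ (-a) * (gammaMeasure a r).real (Iio t)) (𝓝[>] 0)
      (𝓝 (r ^ a / Real.Gamma (a + 1))) := by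
  have hconst : r ^ a / Real.Gamma (a + 1) = r ^ a / Real.Gamma a * a⁻¹ := by
    rw [Real.Gamma_add_one ha.ne', mul_comm a, ← div_div, div_eq_mul_inv _ a]
  rw [hconst]
  refine ((tendsto_rpow_neg_mul_integral_rpow_sub_one_mul_exp ha hr.le).const_mul
    (r ^ a / Real.Gamma a)).congr' ?_
  filter_upwards [self_mem_nhdsWithin] with t (ht : 0 < t)
  rw [measureReal_gammaMeasure_Iio ha hr ht.le, mul_left_comm]

theorem tendsto_rpow_mul_gammaMeasure_lt_rpow_neg_inv {α : ℝ} (ha : 0 < a) (hr : 0 < r)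
    (hα : 0 < α) :
    Tendsto (fun x => x ^ (a * α) * (gammaMeasure a r).real {g | x < g ^ (-(1 / α))}) atTop
      (𝓝 (r ^ a / Real.Gamma (a + 1))) :=
  tendsto_rpow_mul_measureReal_lt_rpow_neg_inv (ae_gammaMeasure_pos a r) hα
    (tendsto_rpow_neg_mul_measureReal_gammaMeasure_Iio ha hr)

end GammaNearZero

theorem integrable_rpow_of_le {Ω : Type*} [MeasurableSpace Ω] {μ : Measure Ω} [IsFiniteMeasure μ]
    {f : Ω → ℝ} (hf : AEStronglyMeasurable f μ) (hf_nonneg : ∀ᵐ ω ∂μ, 0 ≤ f ω) {p q : ℝ}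
    (hp : 0 ≤ p) (hpq : p ≤ q) (hint : Integrable (fun ω => f ω ^ q) μ) :
    Integrable (fun ω => f ω ^ p) μ := by
  have hnorm : ∀ s : ℝ, (fun ω => ‖f ω‖ ^ s) =ᵐ[μ] fun ω => f ω ^ s := fun s => by
    filter_upwards [hf_nonneg] with ω hω
    rw [Real.norm_of_nonneg hω]
  exact (integrable_norm_rpow_of_le hf hp (hp.trans hpq) hpq
    (hint.congr (hnorm q).symm)).congr (hnorm p)

theorem stmt10_general {Ω : Type*} [MeasurableSpace Ω] {μ : Measure Ω} {a r α : ℝ} (ha : 0 < a)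
    (hr : 0 < r) (hα : 0 < α) {Γ A : Ω → ℝ} (hΓ : HasLaw Γ (gammaMeasure a r) μ)
    (hA : AEMeasurable A μ) (hA_nonneg : ∀ᵐ ω ∂μ, 0 ≤ A ω) (hAΓ : IndepFun A Γ μ)
    (hA_int : Integrable (fun ω => A ω ^ (a * α)) μ) :
    Tendsto (fun x => x ^ (a * α) * μ.real {ω | x < A ω * Γ ω ^ (-(1 / α))}) atTop
      (𝓝 ((∫ ω, A ω ^ (a * α) ∂μ) * (r ^ a / Real.Gamma (a + 1)))) := by
  have := isProbabilityMeasure_gammaMeasure ha hr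
  have := hΓ.isProbabilityMeasure
  have hpow : Measurable fun g : ℝ => g ^ (-(1 / α)) := measurable_id.pow_const _
  refine tendsto_rpow_mul_measureReal_lt_mul_of_indepFun (mul_pos ha hα) hA hA_nonneg hA_int
    (hpow.comp_aemeasurable hΓ.aemeasurable) (hAΓ.comp measurable_id hpow) ?_
  refine (tendsto_rpow_mul_gammaMeasure_lt_rpow_neg_inv ha hr hα).congr fun x => ?_
  rw [← hΓ.measureReal_eq (measurableSet_lt measurable_const hpow)]

/-- Let `j ≥ 1`, `α > 0`, `Γ` a Gamma(j,1)-distributed random variable,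
and `A ≥ 0` independent of `Γ` with `E[A^(jα+δ)] < ∞` for some `δ > 0`.  Then
`x^(jα) · P(A·Γ^(−1/α) > x) → E[A^(jα)] / j!` as `x → ∞`. -/
theorem stmt10 {Ω : Type*} [MeasurableSpace Ω] (μ : Measure Ω) [IsProbabilityMeasure μ]
    (j : ℕ) (hj : 0 < j) (α : ℝ) (hα : 0 < α)
    (Γ : Ω → ℝ) (hΓmeas : Measurable Γ)
    (hΓ : Measure.map Γ μ = gammaMeasure (j : ℝ) 1)
    (A : Ω → ℝ) (hAmeas : Measurable A) (hApos : ∀ ω, 0 ≤ A ω)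
    (hindep : IndepFun A Γ μ)
    (hmom : ∃ δ : ℝ, 0 < δ ∧ Integrable (fun ω => A ω ^ ((j : ℝ) * α + δ)) μ) :
    Tendsto (fun x : ℝ => x ^ ((j : ℝ) * α) *
        (μ {ω | x < A ω * Γ ω ^ (-(1 / α))}).toReal) atTop
      (𝓝 ((∫ ω, A ω ^ ((j : ℝ) * α) ∂μ) / (Nat.factorial j : ℝ))) := by
  obtain ⟨δ, hδ, hδ_int⟩ := hmom
  have hA_int : Integrable (fun ω => A ω ^ ((j : ℝ) * α)) μ :=
    integrable_rpow_of_le hAmeas.aestronglyMeasurable (ae_of_all μ hApos) (by positivity)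
      (by linarith) hδ_int
  simpa [Real.Gamma_nat_eq_factorial, div_eq_mul_inv, measureReal_def] using
    stmt10_general (Nat.cast_pos.2 hj) one_pos hα ⟨hΓmeas.aemeasurable, hΓ⟩ hAmeas.aemeasurable
      (ae_of_all μ hApos) hindep hA_int
end
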